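/- Let p be a positive rational number with √p irrational, and let x₁ = a₁ + b₁√p, …, xₙ = aₙ + bₙ√p where each xᵢ > 0 and all aᵢ, bᵢ are rational. Suppose there exist indices i, j ∈ {1, …, n} with aᵢ − bᵢ√p > 0 and aⱼ − bⱼ√p < 0. Then for all positive rational numbers e and f, the number e + f√p belongs to B(x₁, …, xₙ). -/

import Mathlib

/-- `R` is an axis-parallel closed rectangle with side lengths `w` (horizontal)
and `h` (vertical), both positive. -/
def IsRect (R : Set (ℝ × ℝ)) (w h : ℝ) : Prop :=
  0 < w ∧ 0 < h ∧ ∃ x y : ℝ, R = Set.Icc x (x + w) ×ˢ Set.Icc y (y + h)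

/-- The rectangle `R` is tiled by finitely many axis-parallel rectangles, each of
whose side ratios belongs to `ratios`: the tiles cover `R` and have pairwise
disjoint interiors. -/
def TiledBy (R : Set (ℝ × ℝ)) (ratios : Set ℝ) : Prop :=
  ∃ (m : ℕ) (T : Fin m → Set (ℝ × ℝ)) (w h : Fin m → ℝ),
    (∀ i, IsRect (T i) (w i) (h i)) ∧
    (∀ i, w i / h i ∈ ratios ∨ h i / w i ∈ ratios) ∧
    (⋃ i, T i) = R ∧
    Pairwise fun i j => Disjoint (interior (T i)) (interior (T j))

/-- `BSet ratios` is the set of positive reals `z` such that some axis-parallel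
rectangle with side ratio `z` can be tiled by finitely many axis-parallel
rectangles each of whose side ratio belongs to `ratios`. -/
def BSet (ratios : Set ℝ) : Set ℝ :=
  {z | ∃ (W H : ℝ) (R : Set (ℝ × ℝ)),
    IsRect R W H ∧ (z = W / H ∨ z = H / W) ∧ TiledBy R ratios}

/-!
Placing rectangles side by side, and turning them by a right angle, shows that `B` is closed under
addition and inversion, hence under multiplication by positive rationals. If `u = a + b√p` has a
positive conjugate `v = a - b√p`, then `v = (uv) u⁻¹` lies in `B` because the norm `uv` is rational,
so `u + v = 2a`, and with it `1`, lies in `B`. If the conjugate is negative, the same argument with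
`v = b√p - a` gives `u + v = 2b√p`, and with it `√p`.
-/

open Set

section

variable {R R' R₁ R₂ T : Set (ℝ × ℝ)} {ratios : Set ℝ} {w w' w₁ w₂ h h' s u v z : ℝ} {q : ℚ}

namespace IsRect

theorem image_swap (hR : IsRect R w h) : IsRect (Prod.swap '' R) h w := by
  obtain ⟨hw, hh, x, y, rfl⟩ := hR
  exact ⟨hh, hw, y, x, image_swap_prod _ _⟩

theorem image_homothety (hR : IsRect R w h) (hs : 0 < s) (c d : ℝ) :
    IsRect (Prod.map (s * · + c) (s * · + d) '' R) (s * w) (s * h) := by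
  obtain ⟨hw, hh, x, y, rfl⟩ := hR
  refine ⟨by positivity, by positivity, s * x + c, s * y + d, ?_⟩
  rw [prodMap_image_prod, image_affine_Icc' hs, image_affine_Icc' hs]
  ring_nf

theorem exists_homothety_image_eq (hR : IsRect R w h) (hR' : IsRect R' w' h')
    (hratio : w / h = w' / h') :
    ∃ s c d : ℝ, 0 < s ∧ Prod.map (s * · + c) (s * · + d) '' R = R' := by
  obtain ⟨-, hh, x, y, rfl⟩ := hR
  obtain ⟨-, hh', x', y', rfl⟩ := hR'
  have hw' : h' / h * w = w' := by rw [div_mul_comm, hratio, div_mul_cancel₀ w' hh'.ne']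
  refine ⟨h' / h, x' - h' / h * x, y' - h' / h * y, div_pos hh' hh, ?_⟩
  rw [prodMap_image_prod, image_affine_Icc' (div_pos hh' hh), image_affine_Icc' (div_pos hh' hh),
    mul_add, mul_add, hw', div_mul_cancel₀ h' hh.ne']
  ring_nf

theorem exists_eq_union (hR : IsRect R (w₁ + w₂) h) (hw₁ : 0 < w₁) (hw₂ : 0 < w₂) :
    ∃ R₁ R₂, IsRect R₁ w₁ h ∧ IsRect R₂ w₂ h ∧ R₁ ∪ R₂ = R ∧
      Disjoint (interior R₁) (interior R₂) := by
  obtain ⟨-, hh, x, y, rfl⟩ := hR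
  refine ⟨_, _, ⟨hw₁, hh, x, y, rfl⟩, ⟨hw₂, hh, x + w₁, y, rfl⟩, ?_, ?_⟩
  · rw [← union_prod, Icc_union_Icc_eq_Icc (by linarith) (by linarith), add_assoc]
  · simp only [interior_prod_eq, interior_Icc]
    exact Disjoint.set_prod_left
      (disjoint_left.2 fun _ hleft hright => lt_asymm hleft.2 hright.1) _ _

end IsRect

/-- `T` may serve as a tile in a tiling with ratios in `ratios`: it is a rectangle one of whose two
side ratios belongs to `ratios`. -/
def IsTile (ratios : Set ℝ) (T : Set (ℝ × ℝ)) : Prop :=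
  ∃ w h, IsRect T w h ∧ (w / h ∈ ratios ∨ h / w ∈ ratios)

namespace IsTile

theorem image_swap (hT : IsTile ratios T) : IsTile ratios (Prod.swap '' T) := by
  obtain ⟨w, h, hR, hratio⟩ := hT
  exact ⟨h, w, hR.image_swap, hratio.symm⟩

theorem image_homothety (hT : IsTile ratios T) (hs : 0 < s) (c d : ℝ) :
    IsTile ratios (Prod.map (s * · + c) (s * · + d) '' T) := by
  obtain ⟨w, h, hR, hratio⟩ := hT
  refine ⟨s * w, s * h, hR.image_homothety hs c d, ?_⟩
  rwa [mul_div_mul_left _ _ hs.ne', mul_div_mul_left _ _ hs.ne']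

end IsTile

theorem tiledBy_iff_exists_finite : TiledBy R ratios ↔
    ∃ (ι : Type) (_ : Finite ι) (T : ι → Set (ℝ × ℝ)), (∀ i, IsTile ratios (T i)) ∧
      ⋃ i, T i = R ∧ Pairwise fun i j => Disjoint (interior (T i)) (interior (T j)) := by
  constructor
  · rintro ⟨m, T, w, h, hrect, hratio, hcover, hdisj⟩
    exact ⟨Fin m, inferInstance, T, fun i => ⟨w i, h i, hrect i, hratio i⟩, hcover, hdisj⟩
  · rintro ⟨ι, _, T, htile, hcover, hdisj⟩
    obtain ⟨m, ⟨e⟩⟩ := Finite.exists_equiv_fin ι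
    choose w h hrect hratio using htile
    exact ⟨m, T ∘ e.symm, w ∘ e.symm, h ∘ e.symm, fun i => hrect _, fun i => hratio _,
      (e.symm.surjective.iUnion_comp T).trans hcover, hdisj.comp_of_injective e.symm.injective⟩

theorem IsTile.tiledBy (hT : IsTile ratios T) : TiledBy T ratios :=
  tiledBy_iff_exists_finite.2
    ⟨Unit, inferInstance, fun _ => T, fun _ => hT, iUnion_const T, Subsingleton.pairwise⟩

namespace TiledBy

theorem union (hR₁ : TiledBy R₁ ratios) (hR₂ : TiledBy R₂ ratios)
    (hdisj : Disjoint (interior R₁) (interior R₂)) : TiledBy (R₁ ∪ R₂) ratios := by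
  obtain ⟨ι₁, _, T₁, htile₁, rfl, hdisj₁⟩ := tiledBy_iff_exists_finite.1 hR₁
  obtain ⟨ι₂, _, T₂, htile₂, rfl, hdisj₂⟩ := tiledBy_iff_exists_finite.1 hR₂
  have hcross (i : ι₁) (j : ι₂) : Disjoint (interior (T₁ i)) (interior (T₂ j)) :=
    hdisj.mono (interior_mono (subset_iUnion T₁ i)) (interior_mono (subset_iUnion T₂ j))
  refine tiledBy_iff_exists_finite.2 ⟨ι₁ ⊕ ι₂, inferInstance, Sum.elim T₁ T₂,
    Sum.forall.2 ⟨htile₁, htile₂⟩, iUnion_sum, ?_⟩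
  rintro (i | i) (j | j) hij
  · exact hdisj₁ (ne_of_apply_ne Sum.inl hij)
  · exact hcross i j
  · exact (hcross j i).symm
  · exact hdisj₂ (ne_of_apply_ne Sum.inr hij)

theorem image_homeomorph (hR : TiledBy R ratios) (φ : ℝ × ℝ ≃ₜ ℝ × ℝ)
    (hφ : ∀ T, IsTile ratios T → IsTile ratios (φ '' T)) : TiledBy (φ '' R) ratios := by
  obtain ⟨ι, _, T, htile, rfl, hdisj⟩ := tiledBy_iff_exists_finite.1 hR
  refine tiledBy_iff_exists_finite.2 ⟨ι, inferInstance, fun i => φ '' T i, fun i => hφ _ (htile i),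
    (image_iUnion ..).symm, fun i j hij => ?_⟩
  simpa only [← φ.image_interior, disjoint_image_iff φ.injective] using hdisj hij

theorem image_swap (hR : TiledBy R ratios) : TiledBy (Prod.swap '' R) ratios :=
  hR.image_homeomorph (Homeomorph.prodComm ℝ ℝ) fun _ => IsTile.image_swap

theorem image_homothety (hR : TiledBy R ratios) (hs : 0 < s) (c d : ℝ) :
    TiledBy (Prod.map (s * · + c) (s * · + d) '' R) ratios :=
  hR.image_homeomorph ((affineHomeomorph s c hs.ne').prodCongr (affineHomeomorph s d hs.ne'))
    fun _ hT => hT.image_homothety hs c d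

theorem of_div_eq_div (htiled : TiledBy R ratios) (hR : IsRect R w h) (hR' : IsRect R' w' h')
    (hratio : w / h = w' / h') : TiledBy R' ratios := by
  obtain ⟨s, c, d, hs, rfl⟩ := hR.exists_homothety_image_eq hR' hratio
  exact htiled.image_homothety hs c d

end TiledBy

namespace BSet

theorem mem_iff : z ∈ BSet ratios ↔ 0 < z ∧ ∀ R, IsRect R z 1 → TiledBy R ratios := by
  constructor
  · rintro ⟨W, H, R, hR, rfl | rfl, htiled⟩
    · exact ⟨div_pos hR.1 hR.2.1, fun R' hR' => htiled.of_div_eq_div hR hR' (div_one _).symm⟩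
    · exact ⟨div_pos hR.2.1 hR.1, fun R' hR' =>
        htiled.image_swap.of_div_eq_div hR.image_swap hR' (div_one _).symm⟩
  · rintro ⟨hz, htiled⟩
    have hrect : IsRect (Icc 0 (0 + z) ×ˢ Icc 0 (0 + 1)) z 1 := ⟨hz, one_pos, 0, 0, rfl⟩
    exact ⟨z, 1, _, hrect, Or.inl (div_one z).symm, htiled _ hrect⟩

theorem pos_of_mem (hz : z ∈ BSet ratios) : 0 < z := (mem_iff.1 hz).1

theorem mem_of_mem (hz : z ∈ ratios) (hz₀ : 0 < z) : z ∈ BSet ratios :=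
  mem_iff.2 ⟨hz₀, fun _ hR => IsTile.tiledBy ⟨z, 1, hR, Or.inl ((div_one z).symm ▸ hz)⟩⟩

theorem add_mem (hu : u ∈ BSet ratios) (hv : v ∈ BSet ratios) : u + v ∈ BSet ratios := by
  obtain ⟨hu₀, htiled_u⟩ := mem_iff.1 hu
  obtain ⟨hv₀, htiled_v⟩ := mem_iff.1 hv
  refine mem_iff.2 ⟨add_pos hu₀ hv₀, fun R hR => ?_⟩
  obtain ⟨R₁, R₂, hR₁, hR₂, rfl, hdisj⟩ := hR.exists_eq_union hu₀ hv₀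
  exact (htiled_u R₁ hR₁).union (htiled_v R₂ hR₂) hdisj

theorem inv_mem (hz : z ∈ BSet ratios) : z⁻¹ ∈ BSet ratios := by
  obtain ⟨W, H, R, hR, hratio, htiled⟩ := hz
  refine ⟨W, H, R, hR, hratio.symm.imp ?_ ?_, htiled⟩ <;> rintro rfl <;> exact inv_div _ _

theorem natCast_mul_mem (hz : z ∈ BSet ratios) {n : ℕ} (hn : 0 < n) : n * z ∈ BSet ratios := by
  induction n, hn using Nat.le_induction with
  | base => simpa using hz
  | succ n _ ih => simpa [add_mul] using add_mem ih hz

theorem ratCast_mul_mem (hz : z ∈ BSet ratios) (hq : 0 < q) : q * z ∈ BSet ratios := by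
  have hnum : 0 < q.num.natAbs := Int.natAbs_pos.2 (Rat.num_pos.2 hq).ne'
  have hden : z / q.den ∈ BSet ratios := by
    simpa [div_eq_mul_inv] using inv_mem (natCast_mul_mem (inv_mem hz) q.den_pos)
  have hcast : (q : ℝ) = q.num.natAbs / q.den := by
    rw [Nat.cast_natAbs, abs_of_pos (Rat.num_pos.2 hq), Rat.cast_def]
  rw [hcast, div_mul_eq_mul_div, mul_div_assoc]
  exact natCast_mul_mem hden hnum

theorem mem_of_ratCast_mul_mem (hq : 0 < q) (h : q * z ∈ BSet ratios) : z ∈ BSet ratios := by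
  have hq₀ : (q : ℝ) ≠ 0 := by exact_mod_cast hq.ne'
  simpa [hq₀] using ratCast_mul_mem h (inv_pos.2 hq)

theorem mem_of_mul_eq_ratCast (hu : u ∈ BSet ratios) (hv : 0 < v) (huv : u * v = q) :
    v ∈ BSet ratios := by
  have hu₀ : 0 < u := pos_of_mem hu
  have hq : 0 < q := by exact_mod_cast huv ▸ mul_pos hu₀ hv
  have hv_eq : v = q * u⁻¹ := by rw [← huv]; field_simp
  exact hv_eq ▸ ratCast_mul_mem (inv_mem hu) hq

theorem mem_of_mul_eq_ratCast_of_add_eq {t : ℚ} (hu : u ∈ BSet ratios) (hv : 0 < v) (hz : 0 < z)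
    (hmul : u * v = q) (hadd : u + v = t * z) : z ∈ BSet ratios := by
  have hsum : t * z ∈ BSet ratios := hadd ▸ add_mem hu (mem_of_mul_eq_ratCast hu hv hmul)
  have ht : 0 < t := by exact_mod_cast pos_of_mul_pos_left (pos_of_mem hsum) hz.le
  exact mem_of_ratCast_mul_mem ht hsum

end BSet

theorem stmt_18_general {p : ℚ} (hp : 0 < p) {a b c d : ℚ}
    (hab : (a : ℝ) + b * √p ∈ BSet ratios) (hab_conj : 0 < (a : ℝ) - b * √p)
    (hcd : (c : ℝ) + d * √p ∈ BSet ratios) (hcd_conj : (c : ℝ) - d * √p < 0)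
    {e f : ℚ} (he : 0 < e) (hf : 0 < f) :
    (e : ℝ) + f * √p ∈ BSet ratios := by
  have hsqrt : 0 < √(p : ℝ) := Real.sqrt_pos.2 (by exact_mod_cast hp)
  have hsq : √(p : ℝ) ^ 2 = p := Real.sq_sqrt (by exact_mod_cast hp.le)
  have hone : (1 : ℝ) ∈ BSet ratios := by
    refine BSet.mem_of_mul_eq_ratCast_of_add_eq (q := a ^ 2 - p * b ^ 2) (t := 2 * a)
      hab hab_conj one_pos ?_ ?_ <;> push_cast
    · linear_combination -(b : ℝ) ^ 2 * hsq
    · ring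
  have hroot : √(p : ℝ) ∈ BSet ratios := by
    refine BSet.mem_of_mul_eq_ratCast_of_add_eq (q := p * d ^ 2 - c ^ 2) (t := 2 * d)
      hcd (neg_pos.2 hcd_conj) hsqrt ?_ ?_ <;> push_cast
    · linear_combination (d : ℝ) ^ 2 * hsq
    · ring
  simpa using BSet.add_mem (BSet.ratCast_mul_mem hone he) (BSet.ratCast_mul_mem hroot hf)

end

/-- Existence in the mixed-sign case: if some conjugate is positive and some is
negative, then `e + f√p ∈ B(x₁, …, xₙ)` for all positive rationals `e, f`. -/
theorem stmt_18 (p : ℚ) (hp : 0 < p) (hirr : Irrational (Real.sqrt p))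
    (n : ℕ) (a b : Fin n → ℚ) (x : Fin n → ℝ)
    (hx : ∀ i, x i = (a i : ℝ) + (b i : ℝ) * Real.sqrt p)
    (hxpos : ∀ i, 0 < x i)
    (hi : ∃ i : Fin n, 0 < (a i : ℝ) - (b i : ℝ) * Real.sqrt p)
    (hj : ∃ j : Fin n, (a j : ℝ) - (b j : ℝ) * Real.sqrt p < 0)
    (e f : ℚ) (he : 0 < e) (hf : 0 < f) :
    (e : ℝ) + (f : ℝ) * Real.sqrt p ∈ BSet (Set.range x) := by
  obtain ⟨i, hi⟩ := hi
  obtain ⟨j, hj⟩ := hj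
  have mem (k : Fin n) : (a k : ℝ) + b k * √p ∈ BSet (Set.range x) :=
    hx k ▸ BSet.mem_of_mem ⟨k, rfl⟩ (hxpos k)
  exact stmt_18_general hp (mem i) hi (mem j) hj he hf
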